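/- Let F be a finite field of odd characteristic, ψ nontrivial additive character, χ nontrivial multiplicative character, ε a nonsquare, x = [[0,1],[ε,0]], and a,b ∈ Fˣ with χ(a) ≠ χ(b). Define h := δ_{ax} − δ_{bx} on sl₂(F). Then the Fourier transform ĥ(y) = ψ(tr(axy)) − ψ(tr(bxy)) satisfies ĥ(0) = 0 and ∑_{u ∈ Fˣ} ĥ(z_u) χ(u⁻¹) ≠ 0, where z_u = [[0,0],[u,0]]. -/

import Mathlib

/-- Restricting a Gauss sum to the units: a twisted sum of a nontrivial additive character against
a nontrivial character of the unit group does not vanish. -/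
theorem sum_units_addChar_mul_ne_zero {F : Type*} [Field F] [Fintype F] [DecidableEq F]
    {ψ : AddChar F ℂ} (hψ : ψ ≠ 1) {χ : Fˣ →* ℂˣ} (hχ : χ ≠ 1) :
    ∑ u : Fˣ, ψ u * ((χ u⁻¹ : ℂˣ) : ℂ) ≠ 0 := by
  have hφ : (MulChar.ofUnitHom χ)⁻¹ ≠ 1 := by
    rw [Ne, inv_eq_one]
    contrapose! hχ
    ext u
    rw [← MulChar.ofUnitHom_coe, hχ]
    simp
  have hsum : gaussSum (MulChar.ofUnitHom χ)⁻¹ ψ = ∑ u : Fˣ, ψ u * ((χ u⁻¹ : ℂˣ) : ℂ) := by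
    rw [gaussSum]
    symm
    refine Finset.sum_of_injOn (fun u : Fˣ ↦ (u : F)) Units.val_injective.injOn
      (by simp) (fun x _ hx ↦ ?_) (fun u _ ↦ ?_)
    · rw [MulChar.map_nonunit, zero_mul]
      rintro ⟨u, rfl⟩
      simp at hx
    · rw [MulChar.inv_apply', ← Units.val_inv_eq_inv_val, MulChar.ofUnitHom_coe, mul_comm]
  rw [← hsum]
  exact gaussSum_ne_zero_of_nontrivial (by simp) hφ (AddChar.IsPrimitive.of_ne_one hψ)

/-- Rescaling the argument of the additive character multiplies the twisted sum over the units by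
the value of the multiplicative character. -/
theorem sum_units_addChar_mul_left {F : Type*} [Field F] [Fintype F] [DecidableEq F]
    (ψ : AddChar F ℂ) (χ : Fˣ →* ℂˣ) (c : Fˣ) :
    ∑ u : Fˣ, ψ (c * u) * ((χ u⁻¹ : ℂˣ) : ℂ) =
      χ c * ∑ u : Fˣ, ψ u * ((χ u⁻¹ : ℂˣ) : ℂ) := by
  rw [Finset.mul_sum]
  refine Fintype.sum_equiv (Equiv.mulLeft c) _ _ fun u ↦ ?_
  simp
  field_simp

/-- For `h = δ_{ax} − δ_{bx}` with `χ(a) ≠ χ(b)`, the Fourier transform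
`ĥ(y) = ψ(tr(axy)) − ψ(tr(bxy))` satisfies `ĥ(0) = 0` and
`∑_{u ∈ Fˣ} ĥ(z_u) χ(u⁻¹) ≠ 0`. -/
theorem elliptic_test_function (F : Type*) [Field F] [Fintype F] [DecidableEq F]
    (hchar : ringChar F ≠ 2)
    (ψ : AddChar F ℂ) (hψ : ψ ≠ 1)
    (χ : Fˣ →* ℂˣ) (hχ : χ ≠ 1)
    (ε : F) (hε : ¬ IsSquare ε)
    (a b : Fˣ) (hab : χ a ≠ χ b) :
    (ψ ((((a : F) • !![0, 1; ε, 0] : Matrix (Fin 2) (Fin 2) F) * 0).trace)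
      - ψ ((((b : F) • !![0, 1; ε, 0] : Matrix (Fin 2) (Fin 2) F) * 0).trace) = 0) ∧
    (∑ u : Fˣ,
        (ψ ((((a : F) • !![0, 1; ε, 0] : Matrix (Fin 2) (Fin 2) F) * !![0, 0; (u : F), 0]).trace)
          - ψ ((((b : F) • !![0, 1; ε, 0] : Matrix (Fin 2) (Fin 2) F) * !![0, 0; (u : F), 0]).trace))
        * ((χ u⁻¹ : ℂˣ) : ℂ)) ≠ 0 := by
  refine ⟨by simp, ?_⟩
  have htr (c u : F) : ((c • !![0, 1; ε, 0] : Matrix (Fin 2) (Fin 2) F) * !![0, 0; u, 0]).trace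
      = c * u := by
    simp [Matrix.trace_fin_two]
  simp only [htr, sub_mul, Finset.sum_sub_distrib, sum_units_addChar_mul_left]
  rw [← sub_mul]
  exact mul_ne_zero (sub_ne_zero.mpr (Units.val_injective.ne hab))
    (sum_units_addChar_mul_ne_zero hψ hχ)
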